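/- Let X = { x ∈ ℝ⁴ : x₁+x₂+x₃−x₄ ∈ [0,1], x₁+x₂−x₃+x₄ ∈ [0,1], x₁−x₂+x₃+x₄ ∈ [0,1], −x₁+x₂+x₃+x₄ ∈ [0,1] } and let J : ℝ⁴ → ℝ⁴ be given by y₁ = x₁+x₂+x₃−x₄, y₂ = x₁+x₂−x₃+x₄, y₃ = x₁−x₂+x₃+x₄, y₄ = −x₁+x₂+x₃+x₄. Let f(x) = 8x₁x₂x₃x₄ − Σ_{i=1}^4 x_i⁴ + 2 Σ_{1≤i<j≤4} x_i² x_j². Then J(X) = [0,1]⁴, det J = −16, and f*(y) := f(J⁻¹y) = y₁y₂y₃y₄ for all y ∈ [0,1]⁴. -/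

import Mathlib

open MeasureTheory

/-
Up to the order of its rows, the matrix of `J` is `𝟏𝟏ᵀ - 2 I`. Both reversing four rows and negating
a matrix of even size preserve the determinant, so `det J` is the value at `2` of the
characteristic polynomial `t⁴ - 4 t³` of the rank-one matrix `𝟏𝟏ᵀ`. The identity
`f x = ∏ᵢ (J x)ᵢ` equates two expressions for `16 K²`, where `K` is the area of a cyclic
quadrilateral with sides `x₁, x₂, x₃, x₄` (Brahmagupta's formula). Finally, `X` is the preimage of
the unit cube under the surjective map `J`.
-/

section Brahmagupta

open Matrix

variable {R : Type*} [CommRing R]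

theorem det_scalar_sub_vecMulVec {n : Type*} [Fintype n] [DecidableEq n]
    (c : R) (u v : n → R) :
    (scalar n c - vecMulVec u v).det =
      c ^ Fintype.card n - (u ⬝ᵥ v) * c ^ (Fintype.card n - 1) := by
  rw [← eval_charpoly, charpoly_vecMulVec]
  simp

theorem brahmagupta_identity (a b c d : R) :
    (a + b + c - d) * (a + b - c + d) * (a - b + c + d) * (-a + b + c + d) =
      8 * a * b * c * d - (a ^ 4 + b ^ 4 + c ^ 4 + d ^ 4) +
        2 * (a ^ 2 * b ^ 2 + a ^ 2 * c ^ 2 + a ^ 2 * d ^ 2 +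
          b ^ 2 * c ^ 2 + b ^ 2 * d ^ 2 + c ^ 2 * d ^ 2) := by
  ring

variable (R) in
/-- The matrix of the linear map sending the sides of a quadrilateral to the four factors of
Brahmagupta's formula, that is, the sum of all the sides minus twice one of them. The rows are
ordered so that the last side is the first to be subtracted. -/
def brahmaguptaMatrix : Matrix (Fin 4) (Fin 4) R :=
  !![1, 1, 1, -1; 1, 1, -1, 1; 1, -1, 1, 1; -1, 1, 1, 1]

theorem brahmaguptaMatrix_mulVec (x : Fin 4 → R) :
    brahmaguptaMatrix R *ᵥ x =
      ![x 0 + x 1 + x 2 - x 3, x 0 + x 1 - x 2 + x 3,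
        x 0 - x 1 + x 2 + x 3, -x 0 + x 1 + x 2 + x 3] := by
  ext i
  fin_cases i <;> simp [brahmaguptaMatrix, mulVec, dotProduct, Fin.sum_univ_four, sub_eq_add_neg]

theorem brahmaguptaMatrix_eq_submatrix_revPerm :
    brahmaguptaMatrix R =
      (-(scalar (Fin 4) (2 : R) - vecMulVec 1 1)).submatrix Fin.revPerm id := by
  have one_sub_two : (1 : R) - 2 = -1 := by norm_num
  ext i j
  fin_cases i <;> fin_cases j <;> simp [brahmaguptaMatrix, one_sub_two]

theorem det_brahmaguptaMatrix : (brahmaguptaMatrix R).det = -16 := by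
  have sign_rev : Equiv.Perm.sign (Fin.revPerm : Equiv.Perm (Fin 4)) = 1 := by decide
  rw [brahmaguptaMatrix_eq_submatrix_revPerm, det_permute, sign_rev, det_neg,
    det_scalar_sub_vecMulVec]
  norm_num

end Brahmagupta

theorem example_transformation_general {R : Type*} [CommRing R] [Preorder R]
    (X : Set (Fin 4 → R))
    (hX : X = {x : Fin 4 → R |
      x 0 + x 1 + x 2 - x 3 ∈ Set.Icc (0 : R) 1 ∧
      x 0 + x 1 - x 2 + x 3 ∈ Set.Icc (0 : R) 1 ∧
      x 0 - x 1 + x 2 + x 3 ∈ Set.Icc (0 : R) 1 ∧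
      -x 0 + x 1 + x 2 + x 3 ∈ Set.Icc (0 : R) 1})
    (J : (Fin 4 → R) ≃ₗ[R] (Fin 4 → R))
    (hJ : ∀ x : Fin 4 → R, J x =
      ![x 0 + x 1 + x 2 - x 3, x 0 + x 1 - x 2 + x 3,
        x 0 - x 1 + x 2 + x 3, -x 0 + x 1 + x 2 + x 3])
    (f : (Fin 4 → R) → R)
    (hf : ∀ x : Fin 4 → R, f x =
      8 * x 0 * x 1 * x 2 * x 3 - (x 0 ^ 4 + x 1 ^ 4 + x 2 ^ 4 + x 3 ^ 4) +
        2 * (x 0 ^ 2 * x 1 ^ 2 + x 0 ^ 2 * x 2 ^ 2 + x 0 ^ 2 * x 3 ^ 2 +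
          x 1 ^ 2 * x 2 ^ 2 + x 1 ^ 2 * x 3 ^ 2 + x 2 ^ 2 * x 3 ^ 2)) :
    J '' X = {y : Fin 4 → R | ∀ i, y i ∈ Set.Icc (0 : R) 1} ∧
    LinearMap.det (J : (Fin 4 → R) →ₗ[R] (Fin 4 → R)) = -16 ∧
    ∀ y, f (J.symm y) = y 0 * y 1 * y 2 * y 3 := by
  have X_eq_preimage : X = J ⁻¹' {y | ∀ i, y i ∈ Set.Icc (0 : R) 1} := by
    ext x
    simp [hX, hJ, Fin.forall_fin_succ]
  have J_eq_toLin' : (J : (Fin 4 → R) →ₗ[R] (Fin 4 → R)) = Matrix.toLin' (brahmaguptaMatrix R) :=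
    LinearMap.ext fun x => (hJ x).trans (brahmaguptaMatrix_mulVec x).symm
  have f_eq_prod (x : Fin 4 → R) : f x = J x 0 * J x 1 * J x 2 * J x 3 := by
    rw [hf, hJ]
    exact (brahmagupta_identity _ _ _ _).symm
  refine ⟨?_, ?_, fun y => ?_⟩
  · rw [X_eq_preimage, J.surjective.image_preimage]
  · rw [J_eq_toLin', LinearMap.det_toLin', det_brahmaguptaMatrix]
  · rw [f_eq_prod, J.apply_symm_apply]

/-- The example in Section 3: for the linear transformation `J` given by (3.4) and
`f = 8x₁x₂x₃x₄ − Σᵢ xᵢ⁴ + 2Σ_{i<j} xᵢ²xⱼ²` on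
`X = {x ∈ ℝ⁴ : yᵢ(x) ∈ [0,1]}`, we have `J(X) = [0,1]⁴`, `det J = −16`, and
`f*(y) = y₁y₂y₃y₄` on `[0,1]⁴`. -/
theorem example_transformation
    (X : Set (Fin 4 → ℝ))
    (hX : X = {x : Fin 4 → ℝ |
      x 0 + x 1 + x 2 - x 3 ∈ Set.Icc (0 : ℝ) 1 ∧
      x 0 + x 1 - x 2 + x 3 ∈ Set.Icc (0 : ℝ) 1 ∧
      x 0 - x 1 + x 2 + x 3 ∈ Set.Icc (0 : ℝ) 1 ∧
      -x 0 + x 1 + x 2 + x 3 ∈ Set.Icc (0 : ℝ) 1})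
    (J : (Fin 4 → ℝ) ≃ₗ[ℝ] (Fin 4 → ℝ))
    (hJ : ∀ x : Fin 4 → ℝ, J x =
      ![x 0 + x 1 + x 2 - x 3, x 0 + x 1 - x 2 + x 3,
        x 0 - x 1 + x 2 + x 3, -x 0 + x 1 + x 2 + x 3])
    (f : (Fin 4 → ℝ) → ℝ)
    (hf : ∀ x : Fin 4 → ℝ, f x =
      8 * x 0 * x 1 * x 2 * x 3 - (x 0 ^ 4 + x 1 ^ 4 + x 2 ^ 4 + x 3 ^ 4) +
        2 * (x 0 ^ 2 * x 1 ^ 2 + x 0 ^ 2 * x 2 ^ 2 + x 0 ^ 2 * x 3 ^ 2 +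
          x 1 ^ 2 * x 2 ^ 2 + x 1 ^ 2 * x 3 ^ 2 + x 2 ^ 2 * x 3 ^ 2)) :
    J '' X = {y : Fin 4 → ℝ | ∀ i, y i ∈ Set.Icc (0 : ℝ) 1} ∧
    LinearMap.det (J : (Fin 4 → ℝ) →ₗ[ℝ] (Fin 4 → ℝ)) = -16 ∧
    ∀ y ∈ {y : Fin 4 → ℝ | ∀ i, y i ∈ Set.Icc (0 : ℝ) 1},
      f (J.symm y) = y 0 * y 1 * y 2 * y 3 := by
  obtain ⟨image_eq, det_eq, f_symm_eq⟩ := example_transformation_general X hX J hJ f hf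
  exact ⟨image_eq, det_eq, fun y _ => f_symm_eq y⟩
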